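/- arXiv:math/0211223 — 3 statements merged into one kernel-verified Lean document; each statement's English description precedes it below -/
import Mathlib

section
/- Let U ⊆ ℝ² be open and let e₁, e₂, e₃ : U → E be twice continuously differentiable maps such that for every p ∈ U the vectors e₁ p, e₂ p, e₃ p form an orthonormal basis of E with e₃ p = (e₁ p) × (e₂ p). Then the pullback by e₁ of the area form of the unit sphere equals the exterior derivative of the 1-form (de₃)·e₂; concretely, for every p ∈ U and all v, w ∈ ℝ²: ⟪e₁ p, (fderiv ℝ e₁ p v) × (fderiv ℝ e₁ p w)⟫ = fderiv ℝ (fun q => ⟪fderiv ℝ e₃ q w, e₂ q⟫) p v − fderiv ℝ (fun q => ⟪fderiv ℝ e₃ q v, e₂ q⟫) p w. -/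
/-!
Differentiating `q ↦ ⟪de₃(w), e₂⟫` along `v` gives `⟪d²e₃(v, w), e₂⟫ + ⟪de₃(w), de₂(v)⟫`, and the
second-order terms cancel in the exterior derivative because `d²e₃` is symmetric. What is left is
`⟪de₃(w), de₂(v)⟫ - ⟪de₃(v), de₂(w)⟫`.

Differentiating the orthonormality relations gives `⟪deᵢ, eⱼ⟫ = -⟪eᵢ, deⱼ⟫`; in particular
`⟪de₂, e₂⟫ = ⟪de₃, e₃⟫ = 0`. Expanding in the frame, only the `e₁` components contribute to
`⟪de₃(w), de₂(v)⟫`, so it equals `⟪e₃, de₁(w)⟫ ⟪e₂, de₁(v)⟫`. Since `e₁ = e₂ × e₃`, the Binet–Cauchy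
identity identifies the antisymmetrization of this product with `⟪e₁, de₁(v) × de₁(w)⟫`.
-/

open scoped RealInnerProductSpace

noncomputable section

/-- The three-dimensional cross product on `E = EuclideanSpace ℝ (Fin 3)`. -/
def cross3 (a b : EuclideanSpace ℝ (Fin 3)) : EuclideanSpace ℝ (Fin 3) :=
  (WithLp.equiv 2 (Fin 3 → ℝ)).symm
    (crossProduct ((WithLp.equiv 2 (Fin 3 → ℝ)) a) ((WithLp.equiv 2 (Fin 3 → ℝ)) b))

/-- The Binet–Cauchy identity. -/
lemma inner_cross3_cross3 (a b c d : EuclideanSpace ℝ (Fin 3)) :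
    ⟪cross3 a b, cross3 c d⟫ = ⟪a, c⟫ * ⟪b, d⟫ - ⟪a, d⟫ * ⟪b, c⟫ := by
  simp [cross3, crossProduct, PiLp.inner_apply, Fin.sum_univ_three]
  ring

/-- For orthonormal `x`, `y` the right-handed frame `x, y, x × y` satisfies `y × (x × y) = x`. -/
lemma cross3_cross3_of_orthonormal (x y : EuclideanSpace ℝ (Fin 3)) (hxy : ⟪x, y⟫ = 0)
    (hy : ⟪y, y⟫ = 1) : cross3 y (cross3 x y) = x := by
  simp only [PiLp.inner_apply, Fin.sum_univ_three, RCLike.inner_apply, conj_trivial] at hxy hy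
  ext i
  fin_cases i <;> simp [cross3, crossProduct]
  · linear_combination x 0 * hy - y 0 * hxy
  · linear_combination x 1 * hy - y 1 * hxy
  · linear_combination x 2 * hy - y 2 * hxy

/-- Parseval's identity for an orthonormal triple in three-space. -/
lemma inner_eq_of_orthonormal_triple (x y z : EuclideanSpace ℝ (Fin 3))
    (h : Orthonormal ℝ ![x, y, z]) (a b : EuclideanSpace ℝ (Fin 3)) :
    ⟪a, b⟫ = ⟪a, x⟫ * ⟪x, b⟫ + ⟪a, y⟫ * ⟪y, b⟫ + ⟪a, z⟫ * ⟪z, b⟫ := by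
  let B := basisOfOrthonormalOfCardEqFinrank h (by simp)
  have hB : (B : Fin 3 → EuclideanSpace ℝ (Fin 3)) = ![x, y, z] :=
    coe_basisOfOrthonormalOfCardEqFinrank h (by simp)
  have := (B.toOrthonormalBasis (by rw [hB]; exact h)).sum_inner_mul_inner a b
  rw [← this]
  simp [Fin.sum_univ_three, hB]

/-- If `⟪f, g⟫` is constant near `p`, then `⟪df, g⟫ = -⟪f, dg⟫` at `p`. -/
lemma inner_fderiv_eq_neg {F G : Type*} [NormedAddCommGroup F] [NormedSpace ℝ F]
    [NormedAddCommGroup G] [InnerProductSpace ℝ G] {U : Set F} (hU : IsOpen U) {f g : F → G}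
    {p : F} (hp : p ∈ U) (hf : DifferentiableAt ℝ f p) (hg : DifferentiableAt ℝ g p) {c : ℝ}
    (hc : ∀ q ∈ U, ⟪f q, g q⟫ = c) (v : F) :
    ⟪fderiv ℝ f p v, g p⟫ = -⟪f p, fderiv ℝ g p v⟫ := by
  have h1 : (fun q => ⟪f q, g q⟫) =ᶠ[nhds p] fun _ => c := by
    filter_upwards [hU.mem_nhds hp] with q hq using hc q hq
  have h2 := fderiv_inner_apply ℝ hf hg v
  rw [h1.fderiv_eq] at h2
  simp at h2
  linarith

/-- The exterior derivative of the 1-form `(df)·g`: the second derivatives of `f` cancel. -/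
lemma extDeriv_fderiv_inner {F G : Type*} [NormedAddCommGroup F] [NormedSpace ℝ F]
    [NormedAddCommGroup G] [InnerProductSpace ℝ G] {f g : F → G} {p : F}
    (hf : ContDiffAt ℝ 2 f p) (hg : DifferentiableAt ℝ g p) (v w : F) :
    fderiv ℝ (fun q => ⟪fderiv ℝ f q w, g q⟫) p v -
        fderiv ℝ (fun q => ⟪fderiv ℝ f q v, g q⟫) p w =
      ⟪fderiv ℝ f p w, fderiv ℝ g p v⟫ - ⟪fderiv ℝ f p v, fderiv ℝ g p w⟫ := by
  have hd : DifferentiableAt ℝ (fderiv ℝ f) p :=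
    (hf.fderiv_right (m := 1) (by norm_num)).differentiableAt (by norm_num)
  have key (u : F) : DifferentiableAt ℝ (fun q => fderiv ℝ f q u) p :=
    hd.clm_apply (differentiableAt_const u)
  have key2 (u t : F) : fderiv ℝ (fun q => fderiv ℝ f q u) p t = fderiv ℝ (fderiv ℝ f) p t u := by
    rw [fderiv_clm_apply hd (differentiableAt_const u)]
    simp
  have hsymm := (hf.isSymmSndFDerivAt (by simp)).eq v w
  rw [fderiv_inner_apply ℝ (key w) hg, fderiv_inner_apply ℝ (key v) hg, key2, key2, hsymm]
  ring

/-- **Pohl's lemma** (Lemma 3.2): for a moving orthonormal frame `e₁, e₂, e₃` with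
`e₃ = e₁ × e₂`, the pullback by `e₁` of the area form of the unit sphere is the
exterior derivative of the 1-form `(de₃)·e₂`. -/
theorem pohl_lemma
    (U : Set (EuclideanSpace ℝ (Fin 2))) (hU : IsOpen U)
    (e₁ e₂ e₃ : EuclideanSpace ℝ (Fin 2) → EuclideanSpace ℝ (Fin 3))
    (he₁ : ContDiffOn ℝ 2 e₁ U) (he₂ : ContDiffOn ℝ 2 e₂ U) (he₃ : ContDiffOn ℝ 2 e₃ U)
    (horth : ∀ p ∈ U, Orthonormal ℝ ![e₁ p, e₂ p, e₃ p])
    (hcross : ∀ p ∈ U, e₃ p = cross3 (e₁ p) (e₂ p))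
    (p : EuclideanSpace ℝ (Fin 2)) (hp : p ∈ U)
    (v w : EuclideanSpace ℝ (Fin 2)) :
    ⟪e₁ p, cross3 (fderiv ℝ e₁ p v) (fderiv ℝ e₁ p w)⟫ =
      fderiv ℝ (fun q => ⟪fderiv ℝ e₃ q w, e₂ q⟫) p v -
        fderiv ℝ (fun q => ⟪fderiv ℝ e₃ q v, e₂ q⟫) p w := by
  have hnhds := hU.mem_nhds hp
  have h₁ := he₁.contDiffAt hnhds
  have h₂ := he₂.contDiffAt hnhds
  have h₃ := he₃.contDiffAt hnhds
  have d₁ := h₁.differentiableAt (by norm_num)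
  have d₂ := h₂.differentiableAt (by norm_num)
  have d₃ := h₃.differentiableAt (by norm_num)
  have o (q) (hq : q ∈ U) := orthonormal_iff_ite.mp (horth q hq)
  have o₁₂ : ∀ q ∈ U, ⟪e₁ q, e₂ q⟫ = 0 := fun q hq => by simpa using o q hq 0 1
  have o₂₁ : ∀ q ∈ U, ⟪e₂ q, e₁ q⟫ = 0 := fun q hq => by simpa using o q hq 1 0
  have o₃₁ : ∀ q ∈ U, ⟪e₃ q, e₁ q⟫ = 0 := fun q hq => by simpa using o q hq 2 0
  have o₂₂ : ∀ q ∈ U, ⟪e₂ q, e₂ q⟫ = 1 := fun q hq => by simpa using o q hq 1 1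
  have o₃₃ : ∀ q ∈ U, ⟪e₃ q, e₃ q⟫ = 1 := fun q hq => by simpa using o q hq 2 2
  have z₂ (u) : ⟪e₂ p, fderiv ℝ e₂ p u⟫ = 0 := by
    have h := inner_fderiv_eq_neg hU hp d₂ d₂ o₂₂ u
    rw [real_inner_comm] at h
    linarith
  have z₃ (u) : ⟪fderiv ℝ e₃ p u, e₃ p⟫ = 0 := by
    have h := inner_fderiv_eq_neg hU hp d₃ d₃ o₃₃ u
    rw [real_inner_comm _ (e₃ p)] at h
    linarith
  have s₂ (u) : ⟪e₁ p, fderiv ℝ e₂ p u⟫ = -⟪e₂ p, fderiv ℝ e₁ p u⟫ := by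
    rw [real_inner_comm, inner_fderiv_eq_neg hU hp d₂ d₁ o₂₁ u]
  have s₃ (u) : ⟪fderiv ℝ e₃ p u, e₁ p⟫ = -⟪e₃ p, fderiv ℝ e₁ p u⟫ :=
    inner_fderiv_eq_neg hU hp d₃ d₁ o₃₁ u
  have frame (u t) : ⟪fderiv ℝ e₃ p u, fderiv ℝ e₂ p t⟫ =
      ⟪e₃ p, fderiv ℝ e₁ p u⟫ * ⟪e₂ p, fderiv ℝ e₁ p t⟫ := by
    rw [inner_eq_of_orthonormal_triple _ _ _ (horth p hp), z₂, z₃, s₂, s₃]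
    ring
  have he : cross3 (e₂ p) (e₃ p) = e₁ p := by
    rw [hcross p hp]
    exact cross3_cross3_of_orthonormal _ _ (o₁₂ p hp) (o₂₂ p hp)
  rw [extDeriv_fderiv_inner h₃ d₂, frame, frame, ← he, inner_cross3_cross3]
  ring
end
end

section
/- Let U ⊆ ℝ² be open and let e₁, e₂, e₃ : U → E be maps differentiable at a point p ∈ U such that the vectors e₁ p, e₂ p, e₃ p form an orthonormal basis of E with e₃ p = (e₁ p) × (e₂ p). Then for all v, w ∈ ℝ²: ⟪e₁ p, (fderiv ℝ e₁ p v) × (fderiv ℝ e₁ p w)⟫ = ⟪fderiv ℝ e₁ p v, e₂ p⟫ · ⟪fderiv ℝ e₁ p w, e₃ p⟫ − ⟪fderiv ℝ e₁ p w, e₂ p⟫ · ⟪fderiv ℝ e₁ p v, e₃ p⟫. (That is, the pullback of the sphere's area form by e₁ equals the wedge product (de₁·e₂) ∧ (de₁·e₃).) -/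
/-!
The identity is pointwise linear algebra. Write `a`, `b` for the derivatives of `e₁` at `p`
along `v`, `w`. By the Binet–Cauchy identity the right-hand side is `⟪e₂ × e₃, a × b⟫`, and
`e₂ × e₃ = e₂ × (e₁ × e₂) = ‖e₂‖² e₁ - ⟪e₁, e₂⟫ e₂ = e₁` for a positively oriented
orthonormal frame. The proof checks this in coordinates.
-/

open scoped RealInnerProductSpace

noncomputable section

/-- The Leibniz-rule step in the proof of Pohl's lemma: the pullback of the sphere's
area form by `e₁` equals the wedge product `(de₁·e₂) ∧ (de₁·e₃)`. -/
theorem pullback_area_form_eq_wedge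
    (U : Set (EuclideanSpace ℝ (Fin 2))) (hU : IsOpen U)
    (e₁ e₂ e₃ : EuclideanSpace ℝ (Fin 2) → EuclideanSpace ℝ (Fin 3))
    (p : EuclideanSpace ℝ (Fin 2)) (hp : p ∈ U)
    (he₁ : DifferentiableAt ℝ e₁ p) (he₂ : DifferentiableAt ℝ e₂ p)
    (he₃ : DifferentiableAt ℝ e₃ p)
    (horth : Orthonormal ℝ ![e₁ p, e₂ p, e₃ p])
    (hcross : e₃ p = cross3 (e₁ p) (e₂ p))
    (v w : EuclideanSpace ℝ (Fin 2)) :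
    ⟪e₁ p, cross3 (fderiv ℝ e₁ p v) (fderiv ℝ e₁ p w)⟫ =
      ⟪fderiv ℝ e₁ p v, e₂ p⟫ * ⟪fderiv ℝ e₁ p w, e₃ p⟫ -
        ⟪fderiv ℝ e₁ p w, e₂ p⟫ * ⟪fderiv ℝ e₁ p v, e₃ p⟫ := by
  have h22 : ⟪e₂ p, e₂ p⟫ = 1 := by
    simpa using (orthonormal_iff_ite.mp horth) 1 1
  have h12 : ⟪e₁ p, e₂ p⟫ = 0 := by
    simpa using (orthonormal_iff_ite.mp horth) 0 1
  rw [hcross]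
  generalize fderiv ℝ e₁ p v = a
  generalize fderiv ℝ e₁ p w = b
  generalize e₁ p = x at *
  generalize e₂ p = y at *
  simp only [cross3, cross_apply, PiLp.inner_apply, Fin.sum_univ_three, RCLike.inner_apply,
    conj_trivial, WithLp.equiv_apply, WithLp.equiv_symm_apply, Matrix.cons_val] at h22 h12 ⊢
  -- The coefficients are `-⟪x, a × b⟫` and `⟪y, a × b⟫`.
  linear_combination
    (-(x 0 * (a 1 * b 2 - a 2 * b 1) + x 1 * (a 2 * b 0 - a 0 * b 2)
      + x 2 * (a 0 * b 1 - a 1 * b 0))) * h22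
    + (y 0 * (a 1 * b 2 - a 2 * b 1) + y 1 * (a 2 * b 0 - a 0 * b 2)
      + y 2 * (a 0 * b 1 - a 1 * b 0)) * h12
end
end

section
/- Let U ⊆ ℝ² be open and let e₁, e₂, e₃ : U → E be differentiable maps such that for every q ∈ U the vectors e₁ q, e₂ q, e₃ q form an orthonormal basis of E with e₃ q = (e₁ q) × (e₂ q). Then for every p ∈ U and all v, w ∈ ℝ²: ⟪e₁ p, (fderiv ℝ e₁ p v) × (fderiv ℝ e₁ p w)⟫ = ⟪fderiv ℝ e₂ p v, e₁ p⟫ · ⟪fderiv ℝ e₃ p w, e₁ p⟫ − ⟪fderiv ℝ e₂ p w, e₁ p⟫ · ⟪fderiv ℝ e₃ p v, e₁ p⟫. (That is, using the skew-symmetry relations de_i·e_j = −de_j·e_i obtained by differentiating the pointwise orthonormality relations, the pullback of the sphere's area form by e₁ equals the wedge product (de₂·e₁) ∧ (de₃·e₁); this is equation (3.1) of the paper.) -/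
/-!
Differentiating `⟪e₁, eⱼ⟫ = 0` gives `⟪deⱼ, e₁⟫ = -⟪eⱼ, de₁⟫` for `j = 2, 3`
(`inner_fderiv_swap`), so with `a = de₁ v`, `b = de₁ w` the right-hand side becomes
`⟪e₂, a⟫ ⟪e₃, b⟫ - ⟪e₂, b⟫ ⟪e₃, a⟫`, which by the Binet–Cauchy identity is
`⟪e₂ × e₃, a × b⟫`. Since `e₃ = e₁ × e₂`, expanding the double cross product gives
`e₂ × e₃ = ⟪e₂, e₂⟫ e₁ - ⟪e₂, e₁⟫ e₂ = e₁` (`inner_cross3_eq_of_orthonormal`).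
-/

open scoped RealInnerProductSpace

noncomputable section

/-- Skew-symmetry of the connection forms: differentiate `⟪f, g⟫ = 0` on the open set `U`. -/
lemma inner_fderiv_swap {U : Set (EuclideanSpace ℝ (Fin 2))} (hU : IsOpen U)
    {f g : EuclideanSpace ℝ (Fin 2) → EuclideanSpace ℝ (Fin 3)}
    (hf : DifferentiableOn ℝ f U) (hg : DifferentiableOn ℝ g U)
    (hfg : ∀ q ∈ U, ⟪f q, g q⟫ = 0)
    {p : EuclideanSpace ℝ (Fin 2)} (hp : p ∈ U) (v : EuclideanSpace ℝ (Fin 2)) :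
    ⟪fderiv ℝ g p v, f p⟫ = -⟪g p, fderiv ℝ f p v⟫ := by
  have hUp : U ∈ nhds p := hU.mem_nhds hp
  have h := fderiv_inner_apply ℝ (hf.differentiableAt hUp) (hg.differentiableAt hUp) v
  have hzero : (fun q => ⟪f q, g q⟫) =ᶠ[nhds p] fun _ => (0 : ℝ) :=
    Filter.eventually_of_mem hUp hfg
  rw [hzero.fderiv_eq] at h
  simp only [fderiv_fun_const, Pi.zero_apply, _root_.zero_apply] at h
  rw [real_inner_comm (f p) (fderiv ℝ g p v), real_inner_comm (fderiv ℝ f p v) (g p)]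
  linarith

/-- The Binet–Cauchy identity for `⟪y × (x × y), a × b⟫`, where `y × (x × y) = x`
because `y` is a unit vector orthogonal to `x`. -/
lemma inner_cross3_eq_of_orthonormal (x y a b : EuclideanSpace ℝ (Fin 3))
    (hyy : ⟪y, y⟫ = 1) (hxy : ⟪x, y⟫ = 0) :
    ⟪x, cross3 a b⟫ =
      ⟪y, a⟫ * ⟪cross3 x y, b⟫ - ⟪y, b⟫ * ⟪cross3 x y, a⟫ := by
  have key : ⟪y, y⟫ * ⟪x, cross3 a b⟫ - ⟪x, y⟫ * ⟪y, cross3 a b⟫ =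
      ⟪y, a⟫ * ⟪cross3 x y, b⟫ - ⟪y, b⟫ * ⟪cross3 x y, a⟫ := by
    simp [-inner_self_eq_norm_sq_to_K, cross3, cross_apply, PiLp.inner_apply, Fin.sum_univ_three]
    ring
  rw [← key, hyy, hxy]
  ring

/-- Equation (3.1) of the paper: the pullback of the sphere's area form by `e₁`
equals the wedge product `(de₂·e₁) ∧ (de₃·e₁)`. -/
theorem pullback_area_form_eq_wedge'
    (U : Set (EuclideanSpace ℝ (Fin 2))) (hU : IsOpen U)
    (e₁ e₂ e₃ : EuclideanSpace ℝ (Fin 2) → EuclideanSpace ℝ (Fin 3))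
    (he₁ : DifferentiableOn ℝ e₁ U) (he₂ : DifferentiableOn ℝ e₂ U)
    (he₃ : DifferentiableOn ℝ e₃ U)
    (horth : ∀ q ∈ U, Orthonormal ℝ ![e₁ q, e₂ q, e₃ q])
    (hcross : ∀ q ∈ U, e₃ q = cross3 (e₁ q) (e₂ q))
    (p : EuclideanSpace ℝ (Fin 2)) (hp : p ∈ U)
    (v w : EuclideanSpace ℝ (Fin 2)) :
    ⟪e₁ p, cross3 (fderiv ℝ e₁ p v) (fderiv ℝ e₁ p w)⟫ =
      ⟪fderiv ℝ e₂ p v, e₁ p⟫ * ⟪fderiv ℝ e₃ p w, e₁ p⟫ -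
        ⟪fderiv ℝ e₂ p w, e₁ p⟫ * ⟪fderiv ℝ e₃ p v, e₁ p⟫ := by
  have hyy : ⟪e₂ p, e₂ p⟫ = 1 := by
    have h : ‖e₂ p‖ = 1 := by simpa using (horth p hp).1 1
    rw [real_inner_self_eq_norm_sq, h, one_pow]
  have h12 : ∀ q ∈ U, ⟪e₁ q, e₂ q⟫ = 0 := fun q hq => by
    simpa using (horth q hq).2 (show (0 : Fin 3) ≠ 1 by decide)
  have h13 : ∀ q ∈ U, ⟪e₁ q, e₃ q⟫ = 0 := fun q hq => by
    simpa using (horth q hq).2 (show (0 : Fin 3) ≠ 2 by decide)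
  rw [inner_fderiv_swap hU he₁ he₂ h12 hp v, inner_fderiv_swap hU he₁ he₂ h12 hp w,
    inner_fderiv_swap hU he₁ he₃ h13 hp v, inner_fderiv_swap hU he₁ he₃ h13 hp w,
    inner_cross3_eq_of_orthonormal _ _ _ _ hyy (h12 p hp), hcross p hp]
  ring
end
end
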